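/- Let 0<α, 1<p<N/α and q>p−1. Let ω be a nonnegative bounded Radon measure supported in a ball B_R(x0)⊂ℝ^N and let ω_n be the measure with density φ_n*ω, where {φ_n} is a sequence of mollifiers. If there is C2>0 such that ω(K) ≤ C2·Cap_{G_{αp}, q/(q−p+1)}(K) for every compact K⊂ℝ^N, then there is a constant C=C(N,α,p,q)>0 such that ω_n(K) ≤ C·C2·Cap_{G_{αp}, q/(q−p+1)}(K) for every compact K⊂ℝ^N and every n∈ℕ. -/

import Mathlib

open MeasureTheory Metric Set Filter Bornology
open scoped ENNReal NNReal Topology RealInnerProductSpace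

noncomputable section

/-- Euclidean space `ℝ^N`. -/
abbrev Euc (N : ℕ) : Type := EuclideanSpace ℝ (Fin N)

/-- The `R`-truncated Wolff potential `W^R_{α,p}[μ](x)`; `R = ⊤` gives the full
Wolff potential `W_{α,p}[μ]`. -/
def wolff {N : ℕ} (α p : ℝ) (R : ℝ≥0∞) (μ : Measure (Euc N)) (x : Euc N) : ℝ≥0∞ :=
  ∫⁻ ρ in {ρ : ℝ | 0 < ρ ∧ ENNReal.ofReal ρ < R},
    (μ (ball x ρ) / ENNReal.ofReal (ρ ^ ((N : ℝ) - α * p))) ^ (1 / (p - 1)) /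
      ENNReal.ofReal ρ

/-- The `R`-truncated Riesz potential `I^R_β[μ](x)`; `R = ⊤` gives `I_β[μ]`. -/
def rieszPot {N : ℕ} (β : ℝ) (R : ℝ≥0∞) (μ : Measure (Euc N)) (x : Euc N) : ℝ≥0∞ :=
  ∫⁻ ρ in {ρ : ℝ | 0 < ρ ∧ ENNReal.ofReal ρ < R},
    μ (ball x ρ) / ENNReal.ofReal (ρ ^ ((N : ℝ) - β)) / ENNReal.ofReal ρ

/-- The Riesz capacity `Cap_{I_α,p}`. -/
def rieszCap (N : ℕ) (α p : ℝ) (O : Set (Euc N)) : ℝ≥0∞ :=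
  ⨅ (g : Euc N → ℝ≥0∞) (_ : Measurable g)
    (_ : ∀ x ∈ O, 1 ≤ rieszPot α ⊤ (volume.withDensity g) x),
    ∫⁻ x, g x ^ p

/-- The Bessel kernel of order `α` (up to the normalizing constant `c(N,α)`). -/
def besselKernel (N : ℕ) (α : ℝ) (x : Euc N) : ℝ :=
  ∫ t in Ioi (0 : ℝ),
    Real.exp (-(Real.pi * ‖x‖ ^ 2 / t) - t / (4 * Real.pi)) * t ^ ((α - (N : ℝ)) / 2) / t

/-- The Bessel capacity `Cap_{G_α,p}`. -/
def besselCap (N : ℕ) (α p : ℝ) (O : Set (Euc N)) : ℝ≥0∞ :=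
  ⨅ (g : Euc N → ℝ≥0∞) (_ : Measurable g)
    (_ : ∀ x ∈ O, 1 ≤ ∫⁻ y, ENNReal.ofReal (besselKernel N α (x - y)) * g y),
    ∫⁻ x, g x ^ p

/-- The `R`-truncated fractional maximal function `M^R_γ[μ]`. -/
def fracMax {N : ℕ} (γ : ℝ) (R : ℝ≥0∞) (μ : Measure (Euc N)) (x : Euc N) : ℝ≥0∞ :=
  ⨆ (t : ℝ) (_ : 0 < t) (_ : ENNReal.ofReal t < R),
    μ (ball x t) / ENNReal.ofReal (t ^ ((N : ℝ) - γ))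

/-- The potential `L^R_{α,s}[μ]`. -/
def Lpot {N : ℕ} (α s : ℝ) (R : ℝ≥0∞) (μ : Measure (Euc N)) (x : Euc N) : ℝ≥0∞ :=
  ∫⁻ t in {t : ℝ | 0 < t ∧ ENNReal.ofReal t < R},
    (μ (ball x t) / ENNReal.ofReal (t ^ ((N : ℝ) - α))) ^ s / ENNReal.ofReal t

/-- A mollifier: smooth, nonnegative, supported in the unit ball, of total mass one. -/
def IsMollifier {N : ℕ} (φ : Euc N → ℝ) : Prop :=
  ContDiff ℝ (⊤ : ℕ∞) φ ∧ (∀ x, 0 ≤ φ x) ∧ tsupport φ ⊆ ball 0 1 ∧ (∫ x, φ x) = 1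

/-- The measure with density `φ_n * μ`, where `φ_n(x) = n^N φ(n x)`. -/
def mollified {N : ℕ} (φ : Euc N → ℝ) (n : ℕ) (μ : Measure (Euc N)) : Measure (Euc N) :=
  volume.withDensity fun x =>
    ENNReal.ofReal (∫ y, (n : ℝ) ^ (N : ℕ) * φ ((n : ℝ) • (x - y)) ∂μ)

/-!
The measure `φ_n * ω` is a convolution of `ω` with a probability measure, that is, an average of
translates of `ω`. Since the capacity is invariant under translations, every translate of `ω`
satisfies the same capacity estimate as `ω`, and hence so does their average: no constant is lost.
-/

section Convolution

lemma conv_apply {M : Type*} [AddMonoid M] [MeasurableSpace M] [MeasurableAdd₂ M]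
    (μ ν : Measure M) [SFinite ν] {s : Set M} (hs : MeasurableSet s) :
    (μ ∗ ν) s = ∫⁻ x, ν ((x + ·) ⁻¹' s) ∂μ := by
  rw [Measure.conv, Measure.map_apply measurable_add hs, Measure.prod_apply (measurable_add hs)]
  rfl

lemma conv_apply_le_of_forall_preimage_add_left_le {M : Type*} [AddMonoid M] [MeasurableSpace M]
    [MeasurableAdd₂ M] (μ ν : Measure M) [IsProbabilityMeasure μ] [SFinite ν] {s : Set M}
    (hs : MeasurableSet s) {c : ℝ≥0∞} (h : ∀ x, ν ((x + ·) ⁻¹' s) ≤ c) : (μ ∗ ν) s ≤ c :=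
  calc (μ ∗ ν) s = ∫⁻ x, ν ((x + ·) ⁻¹' s) ∂μ := conv_apply μ ν hs
    _ ≤ ∫⁻ _, c ∂μ := lintegral_mono h
    _ = c := by simp

lemma withDensity_conv {G : Type*} [AddGroup G] [MeasurableSpace G] [MeasurableAdd₂ G]
    [MeasurableNeg G] (μ ν : Measure G) [SFinite μ] [SFinite ν] [μ.IsAddRightInvariant]
    {f : G → ℝ≥0∞} (hf : Measurable f) :
    μ.withDensity f ∗ ν = μ.withDensity fun x => ∫⁻ y, f (x - y) ∂ν := by
  refine Measure.ext_of_lintegral _ fun h hh => ?_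
  have hdensity : Measurable fun x => ∫⁻ y, f (x - y) ∂ν :=
    (hf.comp measurable_sub).lintegral_prod_right'
  calc ∫⁻ z, h z ∂(μ.withDensity f ∗ ν)
      = ∫⁻ x, ∫⁻ y, h (x + y) ∂ν ∂μ.withDensity f := Measure.lintegral_conv hh
    _ = ∫⁻ x, f x * ∫⁻ y, h (x + y) ∂ν ∂μ :=
        lintegral_withDensity_eq_lintegral_mul _ hf
          (hh.comp measurable_add).lintegral_prod_right'
    _ = ∫⁻ x, ∫⁻ y, f x * h (x + y) ∂ν ∂μ :=
        lintegral_congr fun x => (lintegral_const_mul _ (hh.comp (measurable_const_add x))).symm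
    _ = ∫⁻ y, ∫⁻ x, f x * h (x + y) ∂μ ∂ν := lintegral_lintegral_swap (by fun_prop)
    _ = ∫⁻ y, ∫⁻ x, f (x - y) * h x ∂μ ∂ν := lintegral_congr fun y => by
        simpa using (lintegral_sub_right_eq_self (fun x => f x * h (x + y)) y).symm
    _ = ∫⁻ x, ∫⁻ y, f (x - y) * h x ∂ν ∂μ := lintegral_lintegral_swap (by fun_prop)
    _ = ∫⁻ x, (∫⁻ y, f (x - y) ∂ν) * h x ∂μ := lintegral_congr fun x =>
        lintegral_mul_const _ (hf.comp (measurable_const.sub measurable_id))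
    _ = ∫⁻ x, h x ∂μ.withDensity fun x => ∫⁻ y, f (x - y) ∂ν :=
        (lintegral_withDensity_eq_lintegral_mul _ hdensity hh).symm

lemma withDensity_ofReal_conv {G : Type*} [AddGroup G] [TopologicalSpace G]
    [IsTopologicalAddGroup G] [SecondCountableTopology G] [MeasurableSpace G] [BorelSpace G]
    (μ ν : Measure G) [SFinite μ] [SFinite ν] [IsFiniteMeasureOnCompacts ν]
    [μ.IsAddRightInvariant] {f : G → ℝ}
    (hf : Continuous f) (hfc : HasCompactSupport f) (hf0 : ∀ x, 0 ≤ f x) :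
    μ.withDensity (fun x => ENNReal.ofReal (f x)) ∗ ν =
      μ.withDensity fun x => ENNReal.ofReal (∫ y, f (x - y) ∂ν) := by
  rw [withDensity_conv μ ν hf.measurable.ennreal_ofReal]
  congr with x
  have hint : Integrable (fun y => f (x - y)) ν :=
    (hf.comp (continuous_sub_left x)).integrable_of_hasCompactSupport
      (hfc.comp_homeomorph (Homeomorph.subLeft x))
  exact (ofReal_integral_eq_lintegral_ofReal hint (.of_forall fun y => hf0 _)).symm

end Convolution

section Mollifier

variable {N : ℕ}

/-- The mass-preserving rescaling `φ_t(x) = t^N φ(t x)` of a function on `ℝ^N`, which shrinks its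
support by the factor `t`; mollifiers use it with `t = n`. -/
def rescale (φ : Euc N → ℝ) (t : ℝ) (x : Euc N) : ℝ := t ^ N * φ (t • x)

lemma integral_rescale (φ : Euc N → ℝ) {t : ℝ} (ht : 0 < t) :
    ∫ x, rescale φ t x = ∫ x, φ x := by
  simp only [rescale, integral_const_mul,
    Measure.integral_comp_smul_of_nonneg volume φ t (hR := ht.le), finrank_euclideanSpace_fin,
    smul_eq_mul]
  exact mul_inv_cancel_left₀ (pow_pos ht N).ne' _

lemma tsupport_rescale_subset (φ : Euc N → ℝ) (t : ℝ) :
    tsupport (rescale φ t) ⊆ (t • ·) ⁻¹' tsupport φ :=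
  tsupport_mul_subset_right.trans (tsupport_comp_subset_preimage φ (continuous_const_smul t))

namespace IsMollifier

variable {φ : Euc N → ℝ}

protected lemma rescale (hφ : IsMollifier φ) {t : ℝ} (ht : 1 ≤ t) : IsMollifier (rescale φ t) := by
  have ht0 : 0 < t := one_pos.trans_le ht
  obtain ⟨hsmooth, hnonneg, hsupp, hint⟩ := hφ
  refine ⟨contDiff_const.mul (hsmooth.comp (contDiff_const_smul t)),
    fun x => mul_nonneg (pow_pos ht0 N).le (hnonneg _), fun x hx => ?_,
    (integral_rescale φ ht0).trans hint⟩
  have htx : ‖t • x‖ < 1 := mem_ball_zero_iff.1 (hsupp (tsupport_rescale_subset φ t hx))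
  rw [norm_smul_of_nonneg ht0.le] at htx
  exact mem_ball_zero_iff.2 ((le_mul_of_one_le_left (norm_nonneg x) ht).trans_lt htx)

protected lemma continuous (hφ : IsMollifier φ) : Continuous φ := hφ.1.continuous

protected lemma hasCompactSupport (hφ : IsMollifier φ) : HasCompactSupport φ :=
  HasCompactSupport.of_support_subset_isCompact (isCompact_closedBall 0 1)
    ((subset_tsupport φ).trans (hφ.2.2.1.trans ball_subset_closedBall))

lemma isProbabilityMeasure_withDensity (hφ : IsMollifier φ) :
    IsProbabilityMeasure (volume.withDensity fun x => ENNReal.ofReal (φ x)) where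
  measure_univ := by
    have hint : Integrable φ := hφ.continuous.integrable_of_hasCompactSupport hφ.hasCompactSupport
    rw [withDensity_apply _ .univ, Measure.restrict_univ,
      ← ofReal_integral_eq_lintegral_ofReal hint (.of_forall hφ.2.1), hφ.2.2.2, ENNReal.ofReal_one]

lemma withDensity_rescale_conv (hφ : IsMollifier φ) {n : ℕ} (hn : 0 < n) (ω : Measure (Euc N))
    [IsLocallyFiniteMeasure ω] :
    volume.withDensity (fun x => ENNReal.ofReal (rescale φ n x)) ∗ ω = mollified φ n ω :=
  have hφn := hφ.rescale (Nat.one_le_cast.2 hn)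
  withDensity_ofReal_conv volume ω hφn.continuous hφn.hasCompactSupport hφn.2.1

end IsMollifier

end Mollifier

section Capacity

variable (N : ℕ) (β s : ℝ)

lemma besselCap_preimage_add_left_le (z : Euc N) (O : Set (Euc N)) :
    besselCap N β s ((z + ·) ⁻¹' O) ≤ besselCap N β s O := by
  refine le_iInf fun g => le_iInf fun hg => le_iInf fun hO => ?_
  have hadmissible : ∀ x ∈ (z + ·) ⁻¹' O,
      1 ≤ ∫⁻ y, ENNReal.ofReal (besselKernel N β (x - y)) * g (z + y) := fun x hx => by
    simpa only [add_sub_add_left_eq_sub] using (hO (z + x) hx).trans_eq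
      (lintegral_add_left_eq_self _ z).symm
  calc besselCap N β s ((z + ·) ⁻¹' O)
      ≤ ∫⁻ x, g (z + x) ^ s :=
        iInf₂_le_of_le _ (hg.comp (measurable_const_add z)) (iInf_le _ hadmissible)
    _ = ∫⁻ x, g x ^ s := lintegral_add_left_eq_self (fun x => g x ^ s) z

lemma besselCap_preimage_add_left (z : Euc N) (O : Set (Euc N)) :
    besselCap N β s ((z + ·) ⁻¹' O) = besselCap N β s O := by
  refine (besselCap_preimage_add_left_le N β s z O).antisymm ?_
  simpa [preimage_preimage] using besselCap_preimage_add_left_le N β s (-z) ((z + ·) ⁻¹' O)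

end Capacity

theorem stmt6_general (N : ℕ) (β s : ℝ) {φ : Euc N → ℝ} (hφ : IsMollifier φ) {ω : Measure (Euc N)}
    [IsLocallyFiniteMeasure ω] {c : ℝ≥0∞}
    (hω : ∀ K : Set (Euc N), IsCompact K → ω K ≤ c * besselCap N β s K)
    {n : ℕ} (hn : 0 < n) {K : Set (Euc N)} (hK : IsCompact K) :
    mollified φ n ω K ≤ c * besselCap N β s K := by
  have := (hφ.rescale (Nat.one_le_cast.2 hn)).isProbabilityMeasure_withDensity
  rw [← hφ.withDensity_rescale_conv hn ω]
  refine conv_apply_le_of_forall_preimage_add_left_le _ ω hK.measurableSet fun z => ?_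
  rw [← besselCap_preimage_add_left N β s z K]
  exact hω _ ((Homeomorph.addLeft z).isCompact_preimage.2 hK)

/-- Stability of the Bessel-capacity Lipschitz estimate under
mollification, for a bounded measure supported in a ball. -/
theorem stmt6 (N : ℕ) (α p q : ℝ) (hα : 0 < α) (hp : 1 < p) (hpN : p < (N : ℝ) / α)
    (hq : p - 1 < q) :
    ∃ C > 0, ∀ (R : ℝ) (x0 : Euc N) (ω : Measure (Euc N)), 0 < R →
      IsFiniteMeasure ω → ω (ball x0 R)ᶜ = 0 →
      ∀ φ : Euc N → ℝ, IsMollifier φ →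
      ∀ C2 : ℝ, 0 < C2 →
      (∀ K : Set (Euc N), IsCompact K →
        ω K ≤ ENNReal.ofReal C2 * besselCap N (α * p) (q / (q - p + 1)) K) →
      ∀ n : ℕ, 0 < n → ∀ K : Set (Euc N), IsCompact K →
        mollified φ n ω K ≤
          ENNReal.ofReal (C * C2) * besselCap N (α * p) (q / (q - p + 1)) K := by
  refine ⟨1, one_pos, fun _ _ ω _ _ _ φ hφ C2 _ hω n hn K hK => ?_⟩
  simpa only [one_mul] using stmt6_general N _ _ hφ hω hn hK
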